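/- arXiv:2303.10706 — 3 statements merged into one kernel-verified Lean document; each statement's English description precedes it below -/
import Mathlib

section
/- Let f : ℝ≥0 → ℝ be a strictly increasing function and let X be a finite set of points in ℝ^d. Let T be an f-max-sum tree of X, i.e., a tree with vertex set X that maximizes the sum ∑_{ab ∈ E(T)} f(‖a−b‖) among all trees with vertex set X. Then T is a Tverberg graph: the closed balls B(xy) over all edges xy of T have a common point. -/
/-!
The balls all contain the centre `z` of the smallest ball enclosing `X`. Write `R` for its
radius; `z` is a convex combination of the points of `X` at distance exactly `R` from `z`
(`exists_enclosing_center`).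

Removing an edge `xy` from the tree splits the vertices into two sides, and joining any vertex
`a` on the side of `x` to any `b` on the side of `y` gives a tree again; by maximality and strict
monotonicity of `f`, `dist a b ≤ dist x y` (`exists_cut`).

Put the origin at `z`. The ball with diameter `xy` contains `z` iff `⟪x, y⟫ ≤ 0`. Suppose instead
that `c = ⟪x, y⟫ > 0`. For points `s`, `s'` of norm `R` on the sides of `x` and `y` respectively,
the inequalities `‖s - y‖, ‖x - s'‖, ‖s - s'‖ ≤ ‖x - y‖` give `⟪s, y⟫, ⟪x, s'⟫, ⟪s, s'⟫ ≥ c`.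
Split the convex combination `0 = ∑ wᵢ sᵢ` as `a + b` according to the sides. Then
`-‖a‖² = ⟪a, b⟫ ≥ 0`, so `a = b = 0`, and `0 = ⟪a, y⟫`, `0 = ⟪x, b⟫` show that both sides have
total weight `0`, a contradiction (`inner_nonpos_of_cut`).
-/

/-- The cost of a graph whose vertices are (labelled by) points in `ℝ^d` with respect to a
function `f : ℝ≥0 → ℝ`: the sum `∑_{ab ∈ E(G)} f(‖a − b‖)` over the edges of the graph. -/
noncomputable def graphCostWrt {d : ℕ} {V : Type} [Fintype V] (f : NNReal → ℝ)
    (p : V → EuclideanSpace ℝ (Fin d)) (G : SimpleGraph V) : ℝ :=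
  ∑ e ∈ (Set.toFinite G.edgeSet).toFinset,
    Sym2.lift ⟨fun x y => f (nndist (p x) (p y)), fun _ _ => by simp [nndist_comm]⟩ e

open scoped RealInnerProductSpace

/-! ### The smallest enclosing ball -/

/-- The variance of the weighted points `w i`, `p i`. Its maximum over the standard simplex is the
squared radius of the smallest enclosing ball, attained at weights with barycentre its centre. -/
noncomputable def weightedVariance {V E : Type*} [Fintype V] [NormedAddCommGroup E]
    [InnerProductSpace ℝ E] (p : V → E) (w : V → ℝ) : ℝ :=
  ∑ i, w i * ‖p i‖ ^ 2 - ‖∑ i, w i • p i‖ ^ 2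

lemma exists_enclosing_center {V E : Type*} [Fintype V] [Nonempty V] [NormedAddCommGroup E]
    [InnerProductSpace ℝ E] (p : V → E) :
    ∃ (z : E) (r : ℝ) (w : V → ℝ), (∀ i, 0 ≤ w i) ∧ ∑ i, w i = 1 ∧ ∑ i, w i • (p i - z) = 0 ∧
      (∀ i, ‖p i - z‖ ^ 2 ≤ r) ∧ ∀ i, w i ≠ 0 → ‖p i - z‖ ^ 2 = r := by
  classical
  obtain ⟨w, hw, hmax⟩ := (isCompact_stdSimplex ℝ V).exists_isMaxOn
    ⟨_, single_mem_stdSimplex ℝ (Classical.arbitrary V)⟩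
    (f := weightedVariance p) (by unfold weightedVariance; fun_prop)
  obtain ⟨hw0, hw1⟩ := hw
  set z : E := ∑ i, w i • p i with hz
  set r : ℝ := weightedVariance p w with hr
  have hr' : r = ∑ i, w i * ‖p i‖ ^ 2 - ‖z‖ ^ 2 := rfl
  -- Moving the weights towards the vertex `j` of the simplex does not increase the variance.
  have hle : ∀ j, ‖p j - z‖ ^ 2 ≤ r := by
    intro j
    have key : ∀ ε : ℝ, 0 < ε → ε ≤ 1 → ‖p j - z‖ ^ 2 - r ≤ ε * ‖p j - z‖ ^ 2 := by
      intro ε h0 h1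
      have hmem : (1 - ε) • w + ε • (Pi.single j 1 : V → ℝ) ∈ stdSimplex ℝ V :=
        convex_stdSimplex ℝ V ⟨hw0, hw1⟩ (single_mem_stdSimplex ℝ j) (by linarith) h0.le (by ring)
      have h := hmax hmem
      have e1 : ∑ i, ((1 - ε) • w + ε • (Pi.single j 1 : V → ℝ)) i * ‖p i‖ ^ 2 =
          (1 - ε) * ∑ i, w i * ‖p i‖ ^ 2 + ε * ‖p j‖ ^ 2 := by
        simp [add_mul, Finset.sum_add_distrib, Finset.mul_sum, Pi.single_apply, mul_assoc]
      have e2 : ∑ i, ((1 - ε) • w + ε • (Pi.single j 1 : V → ℝ)) i • p i = z + ε • (p j - z) := by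
        have : ∑ i, ((1 - ε) • w + ε • (Pi.single j 1 : V → ℝ)) i • p i =
            (1 - ε) • z + ε • p j := by
          simp [add_smul, Finset.sum_add_distrib, hz, Finset.smul_sum, Pi.single_apply, mul_smul]
        rw [this]; module
      have h' : (1 - ε) * ∑ i, w i * ‖p i‖ ^ 2 + ε * ‖p j‖ ^ 2 - ‖z + ε • (p j - z)‖ ^ 2 ≤ r := by
        rw [← e1, ← e2]; exact h
      rw [norm_add_sq_real, norm_smul, inner_smul_right, mul_pow, Real.norm_eq_abs, sq_abs,
        inner_sub_right, real_inner_self_eq_norm_sq] at h'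
      have e3 := norm_sub_sq_real (p j) z
      rw [real_inner_comm] at e3
      have h2 : ε * (‖p j - z‖ ^ 2 - r) ≤ ε * (ε * ‖p j - z‖ ^ 2) := by
        have e4 : ε * ‖p j - z‖ ^ 2 = ε * (‖p j‖ ^ 2 - 2 * ⟪z, p j⟫ + ‖z‖ ^ 2) := by rw [e3]
        have e5 : ∑ i, w i * ‖p i‖ ^ 2 = r + ‖z‖ ^ 2 := by linarith
        rw [e5] at h'
        linarith
      exact le_of_mul_le_mul_left h2 h0
    refine sub_nonpos.1 (ge_of_tendsto (x := nhdsWithin (0 : ℝ) (Set.Ioi 0))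
      (f := fun ε => ε * ‖p j - z‖ ^ 2) ?_ ?_)
    · have : Filter.Tendsto (fun ε : ℝ => ε * ‖p j - z‖ ^ 2) (nhds 0)
          (nhds (0 * ‖p j - z‖ ^ 2)) := (continuous_id.mul continuous_const).tendsto 0
      rw [zero_mul] at this
      exact this.mono_left nhdsWithin_le_nhds
    · filter_upwards [Ioc_mem_nhdsGT (zero_lt_one' ℝ)] with ε hε using key ε hε.1 hε.2
  have hbar : ∑ i, w i • (p i - z) = 0 := by
    simp [smul_sub, Finset.sum_sub_distrib, ← Finset.sum_smul, hw1, hz]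
  -- The weighted mean of `‖p i - z‖ ^ 2` is `r`, so terms of positive weight are equal to `r`.
  have havg : ∑ i, w i * (r - ‖p i - z‖ ^ 2) = 0 := by
    have e1 : ∀ i, w i * (r - ‖p i - z‖ ^ 2) =
        w i * (r - ‖z‖ ^ 2) - w i * ‖p i‖ ^ 2 + 2 * ⟪w i • p i, z⟫ := by
      intro i
      rw [norm_sub_sq_real, real_inner_smul_left]; ring
    simp only [e1, Finset.sum_add_distrib, Finset.sum_sub_distrib, ← Finset.sum_mul,
      ← Finset.mul_sum, ← sum_inner, hw1]
    rw [← hz, real_inner_self_eq_norm_sq]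
    linarith
  refine ⟨z, r, w, hw0, hw1, hbar, hle, fun i hi => ?_⟩
  have := (Finset.sum_eq_zero_iff_of_nonneg
    (fun i _ => mul_nonneg (hw0 i) (sub_nonneg.2 (hle i)))).1 havg i (Finset.mem_univ i)
  have := (mul_eq_zero.1 this).resolve_left hi
  linarith

/-! ### The inner product inequality -/

/-- Here `q` are the points of `X` relative to the centre of the enclosing ball, `r` is its squared
radius, and `A` is the side of `x` when the edge `xy` is removed from the tree. -/
lemma inner_nonpos_of_cut {V E : Type*} [Fintype V] [NormedAddCommGroup E]
    [InnerProductSpace ℝ E] {q : V → E} {r : ℝ} {w : V → ℝ} (hw0 : ∀ i, 0 ≤ w i)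
    (hw1 : ∑ i, w i = 1) (hbar : ∑ i, w i • q i = 0) (hle : ∀ i, ‖q i‖ ^ 2 ≤ r)
    (heq : ∀ i, w i ≠ 0 → ‖q i‖ ^ 2 = r) {x y : V} {A : Set V} (hx : x ∈ A) (hy : y ∉ A)
    (hcut : ∀ a ∈ A, ∀ b ∉ A, ‖q a - q b‖ ≤ ‖q x - q y‖) : ⟪q x, q y⟫ ≤ 0 := by
  classical
  by_contra! hc
  have hcut' : ∀ a ∈ A, ∀ b ∉ A, ‖q a‖ ^ 2 - 2 * ⟪q a, q b⟫ + ‖q b‖ ^ 2 ≤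
      ‖q x‖ ^ 2 - 2 * ⟪q x, q y⟫ + ‖q y‖ ^ 2 := by
    intro a ha b hb
    rw [← norm_sub_sq_real, ← norm_sub_sq_real]
    exact pow_le_pow_left₀ (norm_nonneg _) (hcut a ha b hb) 2
  set S := Finset.univ.filter (· ∈ A) with hS
  set S' := Finset.univ.filter (· ∉ A) with hS'
  have hsum : ∑ i ∈ S, w i • q i + ∑ i ∈ S', w i • q i = 0 := by
    rw [Finset.sum_filter_add_sum_filter_not, hbar]
  have hwsum : ∑ i ∈ S, w i + ∑ i ∈ S', w i = 1 := by
    rw [Finset.sum_filter_add_sum_filter_not, hw1]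
  set a := ∑ i ∈ S, w i • q i with ha
  set b := ∑ i ∈ S', w i • q i with hb
  have hab : 0 ≤ ⟪a, b⟫ := by
    rw [ha, hb, sum_inner]
    refine Finset.sum_nonneg fun i hi => ?_
    rw [inner_sum]
    refine Finset.sum_nonneg fun j hj => ?_
    rw [real_inner_smul_left, real_inner_smul_right]
    rcases eq_or_ne (w i) 0 with h | h
    · simp [h]
    rcases eq_or_ne (w j) 0 with h' | h'
    · simp [h']
    have := hcut' i (by simpa [hS] using hi) j (by simpa [hS'] using hj)
    have h1 : 0 ≤ ⟪q i, q j⟫ := by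
      linarith [heq i h, heq j h', hle x, hle y]
    exact mul_nonneg (hw0 i) (mul_nonneg (hw0 j) h1)
  have hba : b = -a := (neg_eq_of_add_eq_zero_right hsum).symm
  have ha0 : a = 0 := by
    rw [hba, inner_neg_right, real_inner_self_eq_norm_sq] at hab
    exact norm_eq_zero.1 (pow_eq_zero_iff (two_ne_zero) |>.1 (by nlinarith [sq_nonneg ‖a‖]))
  have hb0 : b = 0 := by rw [hba, ha0, neg_zero]
  have h1 : (∑ i ∈ S, w i) * ⟪q x, q y⟫ ≤ ⟪a, q y⟫ := by
    rw [ha, sum_inner, Finset.sum_mul]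
    refine Finset.sum_le_sum fun i hi => ?_
    rw [real_inner_smul_left]
    rcases eq_or_ne (w i) 0 with h | h
    · simp [h]
    have := hcut' i (by simpa [hS] using hi) y hy
    exact mul_le_mul_of_nonneg_left (by linarith [heq i h, hle x]) (hw0 i)
  have h2 : (∑ i ∈ S', w i) * ⟪q x, q y⟫ ≤ ⟪q x, b⟫ := by
    rw [hb, inner_sum, Finset.sum_mul]
    refine Finset.sum_le_sum fun i hi => ?_
    rw [real_inner_smul_right]
    rcases eq_or_ne (w i) 0 with h | h
    · simp [h]
    have := hcut' x hx i (by simpa [hS'] using hi)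
    exact mul_le_mul_of_nonneg_left (by linarith [heq i h, hle y]) (hw0 i)
  rw [ha0, inner_zero_left] at h1
  rw [hb0, inner_zero_right] at h2
  have : (∑ i ∈ S, w i + ∑ i ∈ S', w i) * ⟪q x, q y⟫ ≤ 0 := by linarith
  rw [hwsum] at this
  linarith

/-! ### Exchanging an edge of the tree -/

lemma reachable_or_reachable_deleteEdges {V : Type*} {T : SimpleGraph V} (x y : V) {v : V}
    (h : T.Reachable x v) :
    (T.deleteEdges {s(x, y)}).Reachable x v ∨ (T.deleteEdges {s(x, y)}).Reachable y v := by
  obtain ⟨p⟩ := h.symm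
  induction p with
  | nil => exact .inl .rfl
  | @cons u v' w' hadj p ih =>
    by_cases he : s(u, v') = s(w', y)
    · rcases Sym2.eq_iff.1 he with ⟨rfl, -⟩ | ⟨rfl, -⟩
      · exact .inl .rfl
      · exact .inr .rfl
    · have h' : (T.deleteEdges {s(w', y)}).Adj v' u := by
        rw [SimpleGraph.deleteEdges_adj]
        exact ⟨hadj.symm, by rwa [Set.mem_singleton_iff, Sym2.eq_swap]⟩
      exact (ih ⟨p.reverse⟩).imp (·.trans h'.reachable) (·.trans h'.reachable)

lemma isTree_exchange {V : Type*} {T : SimpleGraph V} (hT : T.IsTree) {x y a b : V}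
    (ha : (T.deleteEdges {s(x, y)}).Reachable x a)
    (hb : ¬ (T.deleteEdges {s(x, y)}).Reachable x b) :
    (T.deleteEdges {s(x, y)} ⊔ SimpleGraph.edge a b).IsTree := by
  have hyb := (reachable_or_reachable_deleteEdges x y (hT.1.preconnected x b)).resolve_left hb
  have hab : ¬ (T.deleteEdges {s(x, y)}).Reachable a b := fun h => hb (ha.trans h)
  have hne : a ≠ b := fun h => hab (h ▸ .rfl)
  have hle : T.deleteEdges {s(x, y)} ≤ T.deleteEdges {s(x, y)} ⊔ SimpleGraph.edge a b :=
    le_sup_left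
  have hadj : (T.deleteEdges {s(x, y)} ⊔ SimpleGraph.edge a b).Adj a b := by
    simp [SimpleGraph.edge_adj, hne]
  have hy := ((ha.mono hle).trans hadj.reachable).trans (hyb.symm.mono hle)
  have hreach : ∀ v, (T.deleteEdges {s(x, y)} ⊔ SimpleGraph.edge a b).Reachable x v := fun v =>
    (reachable_or_reachable_deleteEdges x y (hT.1.preconnected x v)).elim
      (·.mono hle) (fun h => hy.trans (h.mono hle))
  have : Nonempty V := ⟨x⟩
  exact ⟨⟨fun u v => (hreach u).symm.trans (hreach v)⟩,
    (hT.2.anti (SimpleGraph.deleteEdges_le _)).sup_edge_of_not_reachable hab⟩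

lemma graphCostWrt_exchange {d : ℕ} {V : Type} [Fintype V] (f : NNReal → ℝ)
    (p : V → EuclideanSpace ℝ (Fin d)) {T : SimpleGraph V} {x y a b : V} (hxy : T.Adj x y)
    (hab : ¬ (T.deleteEdges {s(x, y)}).Adj a b) (hne : a ≠ b) :
    graphCostWrt f p (T.deleteEdges {s(x, y)} ⊔ SimpleGraph.edge a b) + f (nndist (p x) (p y)) =
      graphCostWrt f p T + f (nndist (p a) (p b)) := by
  classical
  have e1 : (Set.toFinite (T.deleteEdges {s(x, y)} ⊔ SimpleGraph.edge a b).edgeSet).toFinset =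
      insert s(a, b) ((Set.toFinite T.edgeSet).toFinset.erase s(x, y)) := by
    ext e
    simp [SimpleGraph.edgeSet_edge_of_ne hne]
    tauto
  have hnot : s(a, b) ∉ (Set.toFinite T.edgeSet).toFinset.erase s(x, y) := by
    simp only [SimpleGraph.deleteEdges_adj, Set.mem_singleton_iff] at hab
    simp only [Finset.mem_erase, Set.Finite.mem_toFinset, SimpleGraph.mem_edgeSet]
    tauto
  have hmem : s(x, y) ∈ (Set.toFinite T.edgeSet).toFinset := by simpa using hxy
  unfold graphCostWrt
  rw [e1, Finset.sum_insert hnot, ← Finset.add_sum_erase _ _ hmem]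
  simp only [Sym2.lift_mk]
  ring

/-- An edge `xy` of a maximum tree is at least as long as every pair of vertices separated by its
removal. -/
lemma exists_cut {d : ℕ} {V : Type} [Fintype V] {f : NNReal → ℝ} (hf : StrictMono f)
    (p : V → EuclideanSpace ℝ (Fin d)) {T : SimpleGraph V} (hT : T.IsTree)
    (hmax : ∀ T' : SimpleGraph V, T'.IsTree → graphCostWrt f p T' ≤ graphCostWrt f p T)
    {x y : V} (hxy : T.Adj x y) :
    ∃ A : Set V, x ∈ A ∧ y ∉ A ∧ ∀ a ∈ A, ∀ b ∉ A, dist (p a) (p b) ≤ dist (p x) (p y) := by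
  refine ⟨{v | (T.deleteEdges {s(x, y)}).Reachable x v}, .rfl,
    SimpleGraph.isBridge_iff.1 (SimpleGraph.isAcyclic_iff_forall_adj_isBridge.1 hT.2 hxy), ?_⟩
  intro a ha b hb
  have hab : ¬ (T.deleteEdges {s(x, y)}).Reachable a b := fun h => hb (ha.trans h)
  have h1 := hmax _ (isTree_exchange hT ha hb)
  have h2 := graphCostWrt_exchange f p hxy (fun h => hab h.reachable) (fun h => hab (h ▸ .rfl))
  have h3 : f (nndist (p a) (p b)) ≤ f (nndist (p x) (p y)) := by linarith
  exact_mod_cast hf.le_iff_le.1 h3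

lemma dist_midpoint_le_of_inner_nonpos {E : Type*} [NormedAddCommGroup E]
    [InnerProductSpace ℝ E] {x y z : E} (h : ⟪x - z, y - z⟫ ≤ 0) :
    dist z (midpoint ℝ x y) ≤ dist x y / 2 := by
  have e1 : dist z (midpoint ℝ x y) = ‖(x - z) + (y - z)‖ / 2 := by
    have : midpoint ℝ x y - z = (2⁻¹ : ℝ) • ((x - z) + (y - z)) := by
      rw [midpoint_eq_smul_add, invOf_eq_inv]; module
    rw [dist_comm, dist_eq_norm, this, norm_smul]
    norm_num; ring
  have e2 : dist x y = ‖(x - z) - (y - z)‖ := by rw [dist_eq_norm, sub_sub_sub_cancel_right]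
  rw [e1, e2]
  have : ‖(x - z) + (y - z)‖ ^ 2 ≤ ‖(x - z) - (y - z)‖ ^ 2 := by
    rw [norm_add_sq_real, norm_sub_sq_real (x - z)]; linarith
  linarith [pow_le_pow_iff_left₀ (norm_nonneg _) (norm_nonneg _) two_ne_zero |>.1 this]


/-- For a strictly increasing `f : ℝ≥0 → ℝ`, an `f`-max-sum tree of any finite point set
in `ℝ^d` is a Tverberg graph: the closed balls with diameters induced by its edges have a
common point. -/
theorem fMaxSumTree_isTverberg {d : ℕ} (f : NNReal → ℝ) (hf : StrictMono f)
    (X : Finset (EuclideanSpace ℝ (Fin d)))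
    (T : SimpleGraph {x // x ∈ X}) (hT : T.IsTree)
    (hmax : ∀ T' : SimpleGraph {x // x ∈ X}, T'.IsTree →
      graphCostWrt f Subtype.val T' ≤ graphCostWrt f Subtype.val T) :
    ∃ z : EuclideanSpace ℝ (Fin d), ∀ x y : {x // x ∈ X}, T.Adj x y →
      dist z (midpoint ℝ (x : EuclideanSpace ℝ (Fin d)) (y : EuclideanSpace ℝ (Fin d))) ≤
        dist (x : EuclideanSpace ℝ (Fin d)) (y : EuclideanSpace ℝ (Fin d)) / 2 := by
  have : Nonempty {x // x ∈ X} := hT.1.nonempty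
  obtain ⟨z, r, w, hw0, hw1, hbar, hle, heq⟩ :=
    exists_enclosing_center (Subtype.val : {x // x ∈ X} → EuclideanSpace ℝ (Fin d))
  refine ⟨z, fun x y hxy => dist_midpoint_le_of_inner_nonpos ?_⟩
  obtain ⟨A, hx, hy, hcut⟩ := exists_cut hf Subtype.val hT hmax hxy
  refine inner_nonpos_of_cut (q := fun i : {x // x ∈ X} => (i : EuclideanSpace ℝ (Fin d)) - z)
    hw0 hw1 hbar hle heq hx hy fun a ha b hb => ?_
  simpa only [dist_eq_norm, sub_sub_sub_cancel_right] using hcut a ha b hb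
end

section
/- Let n ≥ 1 and let p₁, …, p_{2n} be points in the plane ℝ² (not necessarily distinct). Let M be a perfect matching of the index set {1, …, 2n} that maximizes the cost ∑_{{i,j} ∈ M} ‖p_i − p_j‖ among all perfect matchings of {1, …, 2n}. Then the closed discs B(p_i p_j) over all pairs {i,j} ∈ M have a common point. -/
/-!
Write `mₑ` and `rₑ` for the centre and radius of the disc of an edge `e`, and suppose that the discs
have no common point. Minimizing `maxₑ (‖x - mₑ‖² - rₑ²)` over the plane (here: maximizing the dual
problem over the weights, `common_point_or_weights`) gives a point `z` outside some of the discs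
which is a positive combination of the centres of these discs. Let `uₑ` be the unit vector from `z`
to `mₑ`; then a positive combination of the `uₑ` vanishes.

Split every edge `e` into ends `xₑ`, `yₑ` and let `f` be a permutation of some of these edges.
Joining `xₑ` to `y_{f e}` costs at least `⟪y_{f e} - xₑ, u_{f e}⟫`, so by reindexing the new cost is
at least `∑ₑ (⟪yₑ - z, uₑ⟫ - ⟪xₑ - z, u_{f e}⟫)`. A term of this sum exceeds `2 rₑ` provided that
`uₑ ≠ u_{f e}` and the unit vector `w` from `xₑ` to `yₑ` satisfies
`⟪w, uₑ + u_{f e}⟫ ≥ 1 + ⟪uₑ, u_{f e}⟫`. In the plane the latter holds for one of the two namings of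
the ends if `⟪uₑ, u_{f e}⟫ ≤ ⟪uₑ, w⟫ ⟪w, u_{f e}⟫` (`one_add_inner_le_abs`). As the `uₑ` have a
vanishing positive combination, each `e` has some admissible `f e` (`exists_partner`). The
resulting map `f` permutes its periodic points, and re-pairing those edges yields a perfect matching
(`exists_repaired`) of larger cost (`exists_exchange`), contrary to maximality.
-/

/-- `M` is a perfect matching of the finite set `S`: its edges are non-degenerate
unordered pairs with endpoints in `S`, and every point of `S` lies in exactly one edge. -/
def IsMatchingOf {α : Type} (S : Finset α) (M : Finset (Sym2 α)) : Prop :=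
  (∀ e ∈ M, ¬ e.IsDiag) ∧ (∀ e ∈ M, ∀ v ∈ e, v ∈ S) ∧ (∀ v ∈ S, ∃! e, e ∈ M ∧ v ∈ e)

/-- The cost of a matching `M` of the index set with respect to points `p i` in the
plane: `∑_{{i,j} ∈ M} ‖p i − p j‖`. -/
noncomputable def indexedMatchingCost {n : ℕ} (p : Fin (2 * n) → EuclideanSpace ℝ (Fin 2))
    (M : Finset (Sym2 (Fin (2 * n)))) : ℝ :=
  ∑ e ∈ M, Sym2.lift ⟨fun i j => dist (p i) (p j), fun _ _ => dist_comm _ _⟩ e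

open scoped RealInnerProductSpace

/-! ### Balls without a common point -/

/-- Either finitely many balls `‖x - m i‖ ≤ r i` (in terms of squares) have a common point, or
there is a convex combination `z` of their centres, with weights supported on balls that miss `z`.
The point `z` is the centre of mass for weights maximizing the concave dual function
`∑ wᵢ (‖mᵢ‖² - rᵢ²) - ‖∑ wᵢ mᵢ‖²` of the problem of minimizing
`maxᵢ (‖x - mᵢ‖² - rᵢ²)`. -/
lemma common_point_or_weights {E ι : Type*} [NormedAddCommGroup E] [InnerProductSpace ℝ E]
    [Fintype ι] [Nonempty ι] (m : ι → E) (r : ι → ℝ) :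
    ∃ z : E, (∀ i, ‖m i - z‖ ^ 2 ≤ r i ^ 2) ∨
      ∃ w : ι → ℝ, (∀ i, 0 ≤ w i) ∧ ∑ i, w i = 1 ∧ ∑ i, w i • (m i - z) = 0 ∧
        ∀ i, 0 < w i → r i ^ 2 < ‖m i - z‖ ^ 2 := by
  classical
  let q : ι → ℝ := fun i => ‖m i‖ ^ 2 - r i ^ 2
  let D : (ι → ℝ) → ℝ := fun w => ∑ i, w i * q i - ‖∑ i, w i • m i‖ ^ 2
  have hD : Continuous D := by fun_prop
  obtain ⟨w, hw, hwmax⟩ := (isCompact_stdSimplex ℝ ι).exists_isMaxOn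
    ⟨_, single_mem_stdSimplex ℝ (Classical.arbitrary ι)⟩ hD.continuousOn
  set z := ∑ i, w i • m i with hz
  have hg : ∀ i, ‖m i - z‖ ^ 2 - r i ^ 2 = q i + ‖z‖ ^ 2 - 2 * ⟪z, m i⟫ := by
    intro i
    rw [norm_sub_sq_real, real_inner_comm]
    simp only [q]; ring
  have hle : ∀ i, ‖m i - z‖ ^ 2 - r i ^ 2 ≤ D w := by
    intro i
    -- Moving the weights towards vertex `i` by `t` changes `D` by
    -- `t (‖mᵢ - z‖² - rᵢ² - D w) - t² ‖mᵢ - z‖²`.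
    have key : ∀ t : ℝ, 0 < t → t ≤ 1 →
        (‖m i - z‖ ^ 2 - r i ^ 2) - D w ≤ t * ‖m i - z‖ ^ 2 := by
      intro t ht ht1
      have hmem : (1 - t) • w + t • (Pi.single i 1 : ι → ℝ) ∈ stdSimplex ℝ ι :=
        convex_stdSimplex ℝ ι hw (single_mem_stdSimplex ℝ i) (by linarith) ht.le (by ring)
      have h : D ((1 - t) • w + t • (Pi.single i 1 : ι → ℝ)) ≤ D w := hwmax hmem
      have h1 : ∑ j, ((1 - t) • w + t • (Pi.single i 1 : ι → ℝ)) j * q j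
          = (1 - t) * ∑ j, w j * q j + t * q i := by
        simp [add_mul, Finset.sum_add_distrib, Finset.mul_sum, mul_assoc, Pi.single_apply]
      have h2 : ∑ j, ((1 - t) • w + t • (Pi.single i 1 : ι → ℝ)) j • m j
          = z + t • (m i - z) := by
        have : ∑ j, ((1 - t) • w + t • (Pi.single i 1 : ι → ℝ)) j • m j
            = (1 - t) • z + t • m i := by
          simp [add_smul, Finset.sum_add_distrib, Finset.smul_sum, mul_smul, Pi.single_apply, hz]
        rw [this]; module
      have h3 : ‖z + t • (m i - z)‖ ^ 2
          = ‖z‖ ^ 2 + 2 * t * (⟪z, m i⟫ - ‖z‖ ^ 2) + t ^ 2 * ‖m i - z‖ ^ 2 := by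
        rw [norm_add_sq_real, inner_smul_right, inner_sub_right, real_inner_self_eq_norm_sq,
          norm_smul, mul_pow, Real.norm_eq_abs, sq_abs]
        ring
      simp only [D] at h ⊢
      rw [h1, h2, h3] at h
      rw [hg i]
      have : t * (q i + ‖z‖ ^ 2 - 2 * ⟪z, m i⟫ - (∑ j, w j * q j - ‖z‖ ^ 2))
          ≤ t * (t * ‖m i - z‖ ^ 2) := by nlinarith
      exact le_of_mul_le_mul_left this ht
    by_contra! hcon
    set d := (‖m i - z‖ ^ 2 - r i ^ 2) - D w
    have hd : 0 < d := by simp only [d]; linarith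
    have hN : 0 ≤ ‖m i - z‖ ^ 2 := sq_nonneg _
    have := key (min 1 (d / (2 * (‖m i - z‖ ^ 2 + 1)))) (by positivity) (min_le_left _ _)
    have h2 : min 1 (d / (2 * (‖m i - z‖ ^ 2 + 1))) * ‖m i - z‖ ^ 2
        ≤ d / (2 * (‖m i - z‖ ^ 2 + 1)) * ‖m i - z‖ ^ 2 :=
      mul_le_mul_of_nonneg_right (min_le_right _ _) hN
    have h3 : d / (2 * (‖m i - z‖ ^ 2 + 1)) * ‖m i - z‖ ^ 2 < d := by
      rw [div_mul_eq_mul_div, div_lt_iff₀ (by positivity)]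
      nlinarith
    linarith
  refine ⟨z, ?_⟩
  by_cases h0 : D w ≤ 0
  · left
    intro i
    linarith [hle i]
  right
  push Not at h0
  refine ⟨w, hw.1, hw.2, ?_, ?_⟩
  · simp [smul_sub, Finset.sum_sub_distrib, ← Finset.sum_smul, hw.2, ← hz]
  -- The `w`-average of the numbers `‖mᵢ - z‖² - rᵢ² ≤ D w` is `D w`.
  have havg : ∑ i, w i * (D w - (‖m i - z‖ ^ 2 - r i ^ 2)) = 0 := by
    have h1 : ∑ i, w i * ⟪z, m i⟫ = ‖z‖ ^ 2 := by
      rw [← real_inner_self_eq_norm_sq]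
      nth_rewrite 3 [hz]
      simp [inner_sum, inner_smul_right]
    have h2 : ∑ i, w i * (D w - (‖m i - z‖ ^ 2 - r i ^ 2))
        = (∑ i, w i) * (D w - ‖z‖ ^ 2) - ∑ i, w i * q i + 2 * ∑ i, w i * ⟪z, m i⟫ := by
      rw [Finset.sum_mul, Finset.mul_sum, ← Finset.sum_sub_distrib, ← Finset.sum_add_distrib]
      refine Finset.sum_congr rfl fun i _ => ?_
      rw [hg i]; ring
    rw [h2, h1, hw.2]
    simp only [D, ← hz]; ring
  intro i hi
  have := (Finset.sum_eq_zero_iff_of_nonneg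
    (fun j _ => mul_nonneg (hw.1 j) (sub_nonneg.2 (hle j)))).1 havg i (Finset.mem_univ i)
  rcases mul_eq_zero.1 this with h | h <;> linarith

/-! ### Unit vectors in the plane -/

/-- For unit vectors `u, v, e` of the plane, the line of `e` makes an angle of at most half that
between `u` and `v` with the bisector of `u` and `v`, as soon as `⟪u, v⟫ ≤ ⟪u, e⟫ ⟪e, v⟫`. Planarity
enters through the vanishing of the Gram determinant of `u, v, e`. -/
lemma one_add_inner_le_abs {u v e : EuclideanSpace ℝ (Fin 2)} (hu : ‖u‖ = 1) (hv : ‖v‖ = 1)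
    (he : ‖e‖ = 1) (h : ⟪u, v⟫ ≤ ⟪u, e⟫ * ⟪e, v⟫) : 1 + ⟪u, v⟫ ≤ |⟪e, u + v⟫| := by
  have hw : -1 ≤ ⟪u, v⟫ := by
    have := neg_le_of_abs_le (abs_real_inner_le_norm u v)
    rwa [hu, hv, mul_one] at this
  have hu2 : u 0 ^ 2 + u 1 ^ 2 = 1 := by
    have := EuclideanSpace.real_norm_sq_eq u
    rw [hu, Fin.sum_univ_two] at this; linarith
  have hv2 : v 0 ^ 2 + v 1 ^ 2 = 1 := by
    have := EuclideanSpace.real_norm_sq_eq v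
    rw [hv, Fin.sum_univ_two] at this; linarith
  have he2 : e 0 ^ 2 + e 1 ^ 2 = 1 := by
    have := EuclideanSpace.real_norm_sq_eq e
    rw [he, Fin.sum_univ_two] at this; linarith
  have hin : ∀ x y : EuclideanSpace ℝ (Fin 2), ⟪x, y⟫ = x 0 * y 0 + x 1 * y 1 := by
    intro x y
    simp [PiLp.inner_apply, Fin.sum_univ_two, mul_comm]
  have gram : ⟪u, e⟫ ^ 2 + ⟪e, v⟫ ^ 2 + ⟪u, v⟫ ^ 2 = 1 + 2 * ⟪u, e⟫ * ⟪e, v⟫ * ⟪u, v⟫ := by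
    have : (u 0 ^ 2 + u 1 ^ 2) * (v 0 ^ 2 + v 1 ^ 2) * (e 0 ^ 2 + e 1 ^ 2)
        + 2 * ⟪u, e⟫ * ⟪e, v⟫ * ⟪u, v⟫ - ⟪u, e⟫ ^ 2 * (v 0 ^ 2 + v 1 ^ 2)
        - ⟪e, v⟫ ^ 2 * (u 0 ^ 2 + u 1 ^ 2) - ⟪u, v⟫ ^ 2 * (e 0 ^ 2 + e 1 ^ 2) = 0 := by
      simp only [hin]; ring
    rw [hu2, hv2, he2] at this
    linarith
  refine (pow_le_pow_iff_left₀ (by linarith) (abs_nonneg _) two_ne_zero).1 ?_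
  rw [sq_abs]
  rw [inner_add_right, real_inner_comm u e]
  nlinarith [mul_nonneg (by linarith : 0 ≤ 1 + ⟪u, v⟫) (sub_nonneg.2 h)]

/-- Among unit vectors `u k` with a vanishing positive combination, every `u i` and unit vector
`e` admit a partner `u j ≠ u i` such that, up to sign, `e` is close to the bisector of `u i` and
`u j`: otherwise the numbers `⟪u i, e⟫ ⟪e, u j⟫ - ⟪u i, u j⟫` could not have weighted sum zero. -/
lemma exists_partner {ι : Type*} [Fintype ι] (u : ι → EuclideanSpace ℝ (Fin 2)) (c : ι → ℝ)
    (hc : ∀ i, 0 < c i) (hu : ∀ i, ‖u i‖ = 1) (hsum : ∑ i, c i • u i = 0)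
    (e : EuclideanSpace ℝ (Fin 2)) (he : ‖e‖ = 1) (i : ι) :
    ∃ j, ⟪u i, u j⟫ < 1 ∧ 1 + ⟪u i, u j⟫ ≤ |⟪e, u i + u j⟫| := by
  by_contra! hcon
  set g : ι → ℝ := fun j => ⟪u i, e⟫ * ⟪e, u j⟫ - ⟪u i, u j⟫ with hgdef
  have hie : ⟪u i, e⟫ ^ 2 ≤ 1 := by
    rw [sq_le_one_iff_abs_le_one]
    simpa [hu, he] using abs_real_inner_le_norm (u i) e
  have hg : ∀ j, g j ≤ 0 ∧ (g j = 0 → u j = u i) := by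
    intro j
    by_cases hj : ⟪u i, u j⟫ < 1
    · have : g j < 0 := by
        by_contra! h
        exact absurd (one_add_inner_le_abs (hu i) (hu j) he (by simp only [g] at h; linarith))
          (not_le.2 (hcon j hj))
      exact ⟨this.le, fun h => absurd h this.ne⟩
    · have h1 : ⟪u i, u j⟫ = 1 := le_antisymm
        (by simpa [hu] using real_inner_le_norm (u i) (u j)) (not_lt.1 hj)
      have h2 : u i = u j := (inner_eq_one_iff_of_norm_eq_one (hu i) (hu j)).1 h1
      refine ⟨?_, fun _ => h2.symm⟩
      simp only [g]
      rw [h1, ← h2, real_inner_comm (u i) e]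
      nlinarith
  have hzero : ∑ j, c j * g j = 0 := by
    have h : ∀ x, ∑ j, c j * ⟪x, u j⟫ = 0 := by
      intro x
      have : ⟪x, ∑ j, c j • u j⟫ = 0 := by rw [hsum, inner_zero_right]
      simpa [inner_sum, inner_smul_right] using this
    have : ∑ j, c j * g j = ⟪u i, e⟫ * ∑ j, c j * ⟪e, u j⟫ - ∑ j, c j * ⟪u i, u j⟫ := by
      rw [Finset.mul_sum, ← Finset.sum_sub_distrib]
      refine Finset.sum_congr rfl fun j _ => ?_
      simp only [g]; ring
    rw [this, h, h]; ring
  have hall : ∀ j, u j = u i := by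
    intro j
    have := (Finset.sum_eq_zero_iff_of_nonpos
      (fun j _ => mul_nonpos_of_nonneg_of_nonpos (hc j).le (hg j).1)).1 hzero j (Finset.mem_univ j)
    exact (hg j).2 ((mul_eq_zero.1 this).resolve_left (hc j).ne')
  rw [Finset.sum_congr rfl fun j _ => by rw [hall j], ← Finset.sum_smul] at hsum
  have hpos : 0 < ∑ j, c j := Finset.sum_pos (fun j _ => hc j) ⟨i, Finset.mem_univ i⟩
  rcases smul_eq_zero.1 hsum with h | h
  · exact hpos.ne' h
  · simpa [h] using hu i

/-! ### The exchange of ends -/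

/-- One step of the exchange. The segments `p (a k) p (b k)` have midpoints `z + ρₖ uₖ` with `uₖ` a
unit vector, half-lengths less than `ρₖ`, and `z` is a positive combination of the midpoints. The
ends of segment `i` can be named `x, y` so that the signed contribution of `y` in direction `uᵢ` and
of `x` in the direction `-uⱼ` exceeds the length of the segment. -/
lemma exists_step {V ι : Type*} [Fintype ι] (p : V → EuclideanSpace ℝ (Fin 2)) (a b : ι → V)
    (z : EuclideanSpace ℝ (Fin 2)) (u : ι → EuclideanSpace ℝ (Fin 2)) (ρ c : ι → ℝ)
    (hc : ∀ i, 0 < c i) (hu : ∀ i, ‖u i‖ = 1) (hsum : ∑ i, c i • u i = 0)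
    (hmid : ∀ i, midpoint ℝ (p (a i)) (p (b i)) - z = ρ i • u i)
    (hρ : ∀ i, dist (p (a i)) (p (b i)) / 2 < ρ i) (i : ι) :
    ∃ (j : ι) (x y : V), ((x = a i ∧ y = b i) ∨ (x = b i ∧ y = a i)) ∧
      dist (p (a i)) (p (b i)) < ⟪p y - z, u i⟫ - ⟪p x - z, u j⟫ := by
  set l := dist (p (a i)) (p (b i)) / 2 with hl
  have hl0 : 0 ≤ l := by positivity
  -- `e` is a unit vector along the segment; any unit vector will do if the segment is a point.
  obtain ⟨e, he, hae, hbe⟩ : ∃ e : EuclideanSpace ℝ (Fin 2), ‖e‖ = 1 ∧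
      p (a i) - z = ρ i • u i + l • e ∧ p (b i) - z = ρ i • u i - l • e := by
    obtain ⟨e, he, h⟩ : ∃ e : EuclideanSpace ℝ (Fin 2), ‖e‖ = 1 ∧
        (2 * l) • e = p (a i) - p (b i) := by
      have h2 : 2 * l = ‖p (a i) - p (b i)‖ := by rw [hl, dist_eq_norm]; ring
      by_cases h0 : p (a i) - p (b i) = 0
      · exact ⟨u i, hu i, by rw [h2, h0]; simp⟩
      · refine ⟨‖p (a i) - p (b i)‖⁻¹ • (p (a i) - p (b i)), norm_smul_inv_norm h0, ?_⟩
        rw [h2, smul_inv_smul₀ (norm_ne_zero_iff.2 h0)]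
    have h' : l • e = (1 / 2 : ℝ) • (p (a i) - p (b i)) := by rw [← h]; module
    refine ⟨e, he, ?_, ?_⟩ <;>
    · rw [← hmid i, h', midpoint_eq_smul_add, invOf_eq_inv]
      module
  obtain ⟨j, hj, hle⟩ := exists_partner u c hc hu hsum e he i
  have hd : dist (p (a i)) (p (b i)) = 2 * l := by rw [hl]; ring
  have huu : ⟪u i, u i⟫ = 1 := by rw [real_inner_self_eq_norm_sq, hu]; norm_num
  have hlt : 0 < (ρ i - l) * (1 - ⟪u i, u j⟫) := mul_pos (by linarith [hρ i]) (by linarith)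
  rcases le_abs'.1 hle with h | h
  · refine ⟨j, a i, b i, Or.inl ⟨rfl, rfl⟩, ?_⟩
    rw [hae, hbe, hd]
    simp only [inner_sub_left, inner_add_left, real_inner_smul_left, huu]
    rw [inner_add_right] at h
    nlinarith
  · refine ⟨j, b i, a i, Or.inr ⟨rfl, rfl⟩, ?_⟩
    rw [hae, hbe, hd]
    simp only [inner_sub_left, inner_add_left, real_inner_smul_left, huu]
    rw [inner_add_right] at h
    nlinarith

/-- If all the balls with diameters `p (a k) p (b k)` miss a point that is a positive combination of
their centres, then re-pairing the segments along a permutation of some of them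
lengthens the matching: the partner map `i ↦ j` of the exchange step permutes its periodic points. -/
lemma exists_exchange {V ι : Type} [Fintype ι] [Nonempty ι] (p : V → EuclideanSpace ℝ (Fin 2))
    (a b : ι → V) (z : EuclideanSpace ℝ (Fin 2)) (w : ι → ℝ) (hw : ∀ i, 0 < w i)
    (hsum : ∑ i, w i • (midpoint ℝ (p (a i)) (p (b i)) - z) = 0)
    (hr : ∀ i, dist (p (a i)) (p (b i)) / 2 < ‖midpoint ℝ (p (a i)) (p (b i)) - z‖) :
    ∃ (κ : Type) (_ : Fintype κ) (g : κ → ι) (f : Equiv.Perm κ) (x y : κ → V),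
      Function.Injective g ∧
      (∀ k, (x k = a (g k) ∧ y k = b (g k)) ∨ (x k = b (g k) ∧ y k = a (g k))) ∧
      ∑ k, dist (p (a (g k))) (p (b (g k))) < ∑ k, dist (p (x k)) (p (y (f k))) := by
  classical
  set ρ : ι → ℝ := fun i => ‖midpoint ℝ (p (a i)) (p (b i)) - z‖ with hρ
  have hρ0 : ∀ i, 0 < ρ i := fun i => lt_of_le_of_lt (by positivity) (hr i)
  set u : ι → EuclideanSpace ℝ (Fin 2) :=
    fun i => (ρ i)⁻¹ • (midpoint ℝ (p (a i)) (p (b i)) - z) with hu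
  have hmid : ∀ i, midpoint ℝ (p (a i)) (p (b i)) - z = ρ i • u i := fun i =>
    (smul_inv_smul₀ (hρ0 i).ne' _).symm
  have hu1 : ∀ i, ‖u i‖ = 1 := fun i => norm_smul_inv_norm (norm_pos_iff.1 (hρ0 i))
  have hstep := exists_step p a b z u ρ (fun i => w i * ρ i) (fun i => mul_pos (hw i) (hρ0 i)) hu1
    (by rw [← hsum]; exact Finset.sum_congr rfl fun i _ => by rw [hmid i, mul_smul]) hmid hr
  choose f x y hxy hlt using hstep
  let P := Function.periodicPts f
  have hbij : Set.BijOn f P P := Function.bijOn_periodicPts f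
  obtain ⟨k₀, hk₀⟩ : P.Nonempty := by
    let i₀ := Classical.arbitrary ι
    obtain ⟨m, n, hmn, h⟩ := Finite.exists_ne_map_eq_of_infinite fun n => f^[n] i₀
    wlog hlt : m < n generalizing m n
    · exact this n m hmn.symm h.symm (by lia)
    refine ⟨f^[m] i₀, n - m, by lia, ?_⟩
    change f^[n - m] (f^[m] i₀) = f^[m] i₀
    rw [← Function.iterate_add_apply, Nat.sub_add_cancel hlt.le]
    exact h.symm
  let φ : Equiv.Perm P := hbij.equiv f
  refine ⟨P, inferInstance, Subtype.val, φ, fun k => x k, fun k => y k, Subtype.val_injective,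
    fun k => hxy k, ?_⟩
  have h1 : ∑ k : P, dist (p (a k)) (p (b k))
      < ∑ k : P, (⟪p (y k) - z, u k⟫ - ⟪p (x k) - z, u (f k)⟫) :=
    Finset.sum_lt_sum_of_nonempty ⟨⟨k₀, hk₀⟩, Finset.mem_univ _⟩ fun k _ => hlt k
  refine h1.trans_le ?_
  rw [Finset.sum_sub_distrib, ← Equiv.sum_comp φ (fun k : P => ⟪p (y k) - z, u k⟫),
    ← Finset.sum_sub_distrib]
  refine Finset.sum_le_sum fun k _ => ?_
  have h2 : ((φ k : P) : ι) = f k := rfl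
  simp only [h2]
  rw [← inner_sub_left, sub_sub_sub_cancel_right, dist_comm, dist_eq_norm]
  simpa [hu1] using real_inner_le_norm (p (y (f k)) - p (x k)) (u (f k))

/-! ### Re-pairing a perfect matching -/

/-- Two edges of a matching that share a vertex are equal. -/
lemma IsMatchingOf.eq_of_mem {V : Type} [Fintype V] {M : Finset (Sym2 V)}
    (hM : IsMatchingOf Finset.univ M) {e e' : Sym2 V} (he : e ∈ M) (he' : e' ∈ M) {v : V}
    (hv : v ∈ e) (hv' : v ∈ e') : e = e' :=
  (hM.2.2 v (Finset.mem_univ v)).unique ⟨he, hv⟩ ⟨he', hv'⟩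

/-- Re-pairing the edges `x k y k` of a perfect matching along a permutation `f`, that is,
replacing them by `x k y (f k)`, gives a perfect matching. -/
lemma exists_repaired {V κ : Type} [Fintype V] [DecidableEq V] [Fintype κ]
    {M : Finset (Sym2 V)} (hM : IsMatchingOf Finset.univ M) (x y : κ → V) (f : Equiv.Perm κ)
    (hinj : Function.Injective fun k => s(x k, y k)) (hmem : ∀ k, s(x k, y k) ∈ M) :
    ∃ M' : Finset (Sym2 V), IsMatchingOf Finset.univ M' ∧ ∀ d : Sym2 V → ℝ,
      ∑ e ∈ M', d e + ∑ k, d s(x k, y k) = ∑ e ∈ M, d e + ∑ k, d s(x k, y (f k)) := by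
  classical
  have hshare : ∀ k l v, v ∈ s(x k, y k) → v ∈ s(x l, y l) → k = l := fun k l v hk hl =>
    hinj (hM.eq_of_mem (hmem k) (hmem l) hk hl)
  have hne : ∀ k l, x k ≠ y l := by
    intro k l h
    have hkl : k = l := hshare k l (x k) (by simp) (by simp [h])
    subst hkl
    exact hM.1 _ (hmem k) (by simpa using h)
  have hxx : ∀ k l, x k = x l → k = l := fun k l h => hshare k l (x k) (by simp) (by simp [h])
  have hyy : ∀ k l, y k = y l → k = l := fun k l h => hshare k l (y k) (by simp) (by simp [h])
  have hinj' : Function.Injective fun k => s(x k, y (f k)) := by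
    intro k l h
    rcases Sym2.eq_iff.1 h with h | h
    · exact hxx _ _ h.1
    · exact absurd h.1 (hne _ _)
  set O := Finset.univ.image fun k => s(x k, y k) with hO
  set N := Finset.univ.image fun k => s(x k, y (f k)) with hN
  have hOM : O ⊆ M := by
    intro e he
    obtain ⟨k, -, rfl⟩ := Finset.mem_image.1 he
    exact hmem k
  -- Old and new edges cover the same vertices.
  have hcover : ∀ v k, v ∈ s(x k, y (f k)) → ∃ e ∈ O, v ∈ e := by
    intro v k hv
    rcases Sym2.mem_iff.1 hv with rfl | rfl
    · exact ⟨_, Finset.mem_image_of_mem _ (Finset.mem_univ k), by simp⟩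
    · exact ⟨_, Finset.mem_image_of_mem _ (Finset.mem_univ (f k)), by simp⟩
  have hkept : ∀ e ∈ M \ O, ∀ k, ∀ v ∈ e, v ∉ s(x k, y (f k)) := by
    intro e he k v hv hv'
    obtain ⟨e', he', hve'⟩ := hcover v k hv'
    rw [Finset.mem_sdiff] at he
    exact he.2 (hM.eq_of_mem he.1 (hOM he') hv hve' ▸ he')
  have hnew : ∀ k l v, v ∈ s(x k, y (f k)) → v ∈ s(x l, y (f l)) → k = l := by
    intro k l v hk hl
    rcases Sym2.mem_iff.1 hk with rfl | rfl <;> rcases Sym2.mem_iff.1 hl with h | h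
    · exact hxx _ _ h
    · exact absurd h (hne _ _)
    · exact absurd h.symm (hne _ _)
    · exact f.injective (hyy _ _ h)
  have hdisj : Disjoint (M \ O) N := by
    rw [Finset.disjoint_left]
    intro e he heN
    obtain ⟨k, -, rfl⟩ := Finset.mem_image.1 heN
    exact hkept _ he k (x k) (by simp) (by simp)
  refine ⟨(M \ O) ∪ N, ⟨?_, fun _ _ v _ => Finset.mem_univ v, ?_⟩, ?_⟩
  · intro e he
    rcases Finset.mem_union.1 he with he | he
    · exact hM.1 e (Finset.mem_sdiff.1 he).1
    · obtain ⟨k, -, rfl⟩ := Finset.mem_image.1 he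
      simpa using hne k (f k)
  · intro v _
    obtain ⟨e, ⟨he, hve⟩, -⟩ := hM.2.2 v (Finset.mem_univ v)
    have hex : ∃ e, e ∈ (M \ O) ∪ N ∧ v ∈ e := by
      by_cases heO : e ∈ O
      · obtain ⟨k, -, rfl⟩ := Finset.mem_image.1 heO
        rcases Sym2.mem_iff.1 hve with rfl | rfl
        · exact ⟨_, Finset.mem_union_right _ (Finset.mem_image_of_mem _ (Finset.mem_univ k)),
            by simp⟩
        · exact ⟨_, Finset.mem_union_right _
            (Finset.mem_image_of_mem _ (Finset.mem_univ (f.symm k))), by simp⟩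
      · exact ⟨e, Finset.mem_union_left _ (Finset.mem_sdiff.2 ⟨he, heO⟩), hve⟩
    obtain ⟨e₁, he₁, hv₁⟩ := hex
    refine ⟨e₁, ⟨he₁, hv₁⟩, ?_⟩
    rintro e₂ ⟨he₂, hv₂⟩
    rcases Finset.mem_union.1 he₁ with h₁ | h₁ <;> rcases Finset.mem_union.1 he₂ with h₂ | h₂
    · exact hM.eq_of_mem (Finset.mem_sdiff.1 h₂).1 (Finset.mem_sdiff.1 h₁).1 hv₂ hv₁
    · obtain ⟨k, -, rfl⟩ := Finset.mem_image.1 h₂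
      exact absurd hv₂ (hkept _ h₁ k v hv₁)
    · obtain ⟨k, -, rfl⟩ := Finset.mem_image.1 h₁
      exact absurd hv₁ (hkept _ h₂ k v hv₂)
    · obtain ⟨k, -, rfl⟩ := Finset.mem_image.1 h₁
      obtain ⟨l, -, rfl⟩ := Finset.mem_image.1 h₂
      rw [hnew k l v hv₁ hv₂]
  · intro d
    have h1 : ∑ e ∈ O, d e = ∑ k, d s(x k, y k) := Finset.sum_image fun _ _ _ _ h => hinj h
    have h2 : ∑ e ∈ N, d e = ∑ k, d s(x k, y (f k)) := Finset.sum_image fun _ _ _ _ h => hinj' h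
    rw [Finset.sum_union hdisj, ← h1, ← h2, ← Finset.sum_sdiff hOM]
    ring

/-! ### Maximum-sum matchings -/

/-- For points `p₁, …, p_{2n}` in the plane (not necessarily distinct), if `M` is a
perfect matching of the index set `{1, …, 2n}` maximizing `∑_{{i,j} ∈ M} ‖p_i − p_j‖`,
then the closed discs with diameters `p_i p_j` over the pairs `{i, j} ∈ M` have a
common point. -/
theorem maxSumMatching_indexed_isTverberg {n : ℕ} (hn : 1 ≤ n)
    (p : Fin (2 * n) → EuclideanSpace ℝ (Fin 2))
    (M : Finset (Sym2 (Fin (2 * n)))) (hM : IsMatchingOf Finset.univ M)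
    (hmax : ∀ M' : Finset (Sym2 (Fin (2 * n))),
      IsMatchingOf Finset.univ M' → indexedMatchingCost p M' ≤ indexedMatchingCost p M) :
    ∃ z : EuclideanSpace ℝ (Fin 2), ∀ i j : Fin (2 * n), s(i, j) ∈ M →
      dist z (midpoint ℝ (p i) (p j)) ≤ dist (p i) (p j) / 2 := by
  classical
  rcases M.eq_empty_or_nonempty with rfl | hne
  · exact ⟨0, fun i j h => absurd h (Finset.notMem_empty _)⟩
  have : Nonempty M := hne.to_subtype
  -- Choose an ordering of the ends of every edge.
  have hends : ∀ e : M, ∃ a b, (e : Sym2 (Fin (2 * n))) = s(a, b) := by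
    rintro ⟨e, he⟩
    induction e with | _ a b => exact ⟨a, b, rfl⟩
  choose a b hab using hends
  obtain ⟨z, hz | ⟨w, hw0, hw1, hwz, hwr⟩⟩ := common_point_or_weights
    (fun e : M => midpoint ℝ (p (a e)) (p (b e))) (fun e => dist (p (a e)) (p (b e)) / 2)
  · refine ⟨z, fun i j hij => ?_⟩
    have h := abs_le_of_sq_le_sq' (hz ⟨_, hij⟩) (by positivity) |>.2
    rw [← dist_eq_norm, dist_comm] at h
    rcases Sym2.eq_iff.1 (hab ⟨_, hij⟩) with ⟨h1, h2⟩ | ⟨h1, h2⟩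
    · rwa [← h1, ← h2] at h
    · rwa [← h1, ← h2, midpoint_comm, dist_comm (p j)] at h
  exfalso
  let ι := {e : M // 0 < w e}
  obtain ⟨i₀, -, hi₀⟩ : ∃ i ∈ Finset.univ, 0 < w i :=
    Finset.exists_lt_of_sum_lt (by rw [hw1]; simp)
  have : Nonempty ι := ⟨⟨i₀, hi₀⟩⟩
  have hsum : ∑ i : ι, w i.1 • (midpoint ℝ (p (a i.1)) (p (b i.1)) - z) = 0 := by
    rw [← hwz, ← Finset.sum_subtype (Finset.univ.filter fun e => 0 < w e) (by simp)
      (fun e => w e • (midpoint ℝ (p (a e)) (p (b e)) - z))]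
    refine Finset.sum_subset (Finset.filter_subset _ _) fun e _ he => ?_
    have h0 : w e = 0 := le_antisymm (by simpa using he) (hw0 e)
    rw [h0, zero_smul]
  obtain ⟨κ, _, g, f, x, y, hg, hxy, hlt⟩ := exists_exchange p (fun i : ι => a i.1)
    (fun i : ι => b i.1) z (fun i => w i.1) (fun i => i.2) hsum
    (fun i => lt_of_pow_lt_pow_left₀ 2 (norm_nonneg _) (hwr i.1 i.2))
  have hedge : ∀ k, s(x k, y k) = ((g k).1 : Sym2 (Fin (2 * n))) := by
    intro k
    rw [hab]
    rcases hxy k with ⟨h1, h2⟩ | ⟨h1, h2⟩ <;> rw [h1, h2]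
    exact Sym2.eq_swap
  obtain ⟨M', hM', hcost⟩ := exists_repaired hM x y f
    (fun k l h => hg (Subtype.ext (Subtype.ext (by simpa only [hedge] using h))))
    (fun k => by rw [hedge]; exact (g k).1.2)
  have h1 := hcost (Sym2.lift ⟨fun i j => dist (p i) (p j), fun _ _ => dist_comm _ _⟩)
  have h2 := hmax M' hM'
  simp only [hedge] at h1
  simp only [hab, Sym2.lift_mk] at h1
  unfold indexedMatchingCost at h2
  linarith
end

section
/- Let r > 0 and let k ∈ {2, 3}. Let a₁b₁, …, a_kb_k be k segments in ℝ² whose 2k endpoints a₁, b₁, …, a_k, b_k are pairwise distinct, such that: (i) for each i, ‖(a_i+b_i)/2‖ = r + ‖a_i−b_i‖/2, i.e., the closed disc B(a_ib_i) with diameter a_ib_i is externally tangent to the circle Ω of radius r centered at the origin o; (ii) o ∈ conv{(a_i+b_i)/2 : 1 ≤ i ≤ k}, while o ∉ conv{(a_i+b_i)/2 : i ∈ I} for every proper nonempty subset I ⊊ {1, …, k}. For each i let t_i = r·(a_i+b_i)/‖a_i+b_i‖ (the tangency point of Ω and B(a_ib_i)), let ℓ_i = {x : ⟨x − t_i, a_i+b_i⟩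 = 0} (the common internal tangent line of Ω and B(a_ib_i)), and set r_{a_i} = dist(a_i, ℓ_i) and r_{b_i} = dist(b_i, ℓ_i). Then for every index i there exists an index j ≠ i such that either both ‖a_i − a_j‖ > r_{a_i} + r_{a_j} and ‖a_i − b_j‖ > r_{a_i} + r_{b_j}, or both ‖b_i − a_j‖ > r_{b_i} + r_{a_j} and ‖b_i − b_j‖ > r_{b_i} + r_{b_j}. -/
/-!
Write `u_j` for the unit vector along `a_j + b_j`. Fix `i` and suppose no `j ≠ i` works. Then for
each `j ≠ i` the disc around `a_i` touching `ℓ_i` meets the disc around `a_j` or `b_j` touching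
`ℓ_j`, hence meets the half-plane `⟪x, u_j⟫ ≥ r`; this says `⟪a_i, u_i + u_j⟫ ≥ 2r`, and likewise
`⟪b_i, u_i + u_j⟫ ≥ 2r` (`two_mul_le_of_near`).

In the frame at `t_i` with first axis `u_i`, the points `a_i`, `b_i` are `(x, y)` and `(x', -y)`
with `x x' = y²` (Thales). With `u_j = (cos α, sin α)` and, say, `y > 0`, the two inequalities
confine `α` to the open arc from `-2 arctan (x / y)` to `2 arctan (x' / y)`. Its length is exactly
`π` because `x / y` and `x' / y` are inverse to each other, so all `u_j`, including `u_i`, lie in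
the open half-plane with inner normal `(2y, x' - x)`, which is perpendicular to `a_i b_i`
(`pos_of_touching`, `exists_normal`). This contradicts `0` being a convex combination of the
midpoints (`not_mem_convexHull_of_pos`).
-/

open scoped RealInnerProductSpace

/-- A unit vector `(c, s)` satisfying both touching inequalities lies in the open half-plane with
inner normal `(2y, x' - x)`. -/
lemma pos_of_touching {r x x' y c s : ℝ} (hr : 0 < r) (hx : 0 ≤ x) (hx' : 0 ≤ x')
    (hxy : x * x' = y ^ 2) (hy : 0 < y) (hcs : c ^ 2 + s ^ 2 = 1)
    (h1 : r * (1 - c) ≤ x * (1 + c) + y * s) (h2 : r * (1 - c) ≤ x' * (1 + c) - y * s) :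
    0 < 2 * y * c + (x' - x) * s := by
  have hc1 : c ≤ 1 := by nlinarith [sq_nonneg s]
  rcases hc1.lt_or_eq with hc | rfl
  · have hpos : 0 < r * (1 - c) := mul_pos hr (by linarith)
    have g1 : 0 < x * (1 + c) + y * s := by linarith
    have g2 : 0 < x' * (1 + c) - y * s := by linarith
    have hx0 : 0 < x := hx.lt_of_ne (by rintro rfl; nlinarith [pow_pos hy 2])
    have hx'0 : 0 < x' := hx'.lt_of_ne (by rintro rfl; nlinarith [pow_pos hy 2])
    have hc' : 0 < 1 + c := by
      by_contra hn
      nlinarith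
    -- Multiplying `g2` by `x` and `g1` by `x'` and using `x x' = y²` bounds `x s` and
    -- `-x' s` by `y (1 + c)`.
    have k1 : x * s < y * (1 + c) := by
      have : 0 < y * (y * (1 + c) - x * s) := by
        have := mul_pos hx0 g2
        linear_combination this + (1 + c) * hxy
      have := pos_of_mul_pos_right this hy.le
      linarith
    have k2 : -(x' * s) < y * (1 + c) := by
      have : 0 < y * (y * (1 + c) + x' * s) := by
        have := mul_pos hx'0 g1
        linear_combination this + (1 + c) * hxy
      have := pos_of_mul_pos_right this hy.le
      linarith
    -- On the other hand `s² = (1 - c) (1 + c)` turns `g1`, `g2` into bounds by `y (1 - c)`.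
    rcases le_total 0 s with hs | hs
    · have : 0 ≤ (1 + c) * (x' * s - y * (1 - c)) := by
        have := mul_nonneg hs g2.le
        linear_combination this - y * hcs
      have := nonneg_of_mul_nonneg_right this hc'
      linarith
    · have : 0 ≤ (1 + c) * (-(x * s) - y * (1 - c)) := by
        have := mul_nonneg (neg_nonneg.2 hs) g1.le
        linear_combination this - y * hcs
      have := nonneg_of_mul_nonneg_right this hc'
      linarith
  · have hs : s = 0 := by nlinarith
    subst hs
    linarith

lemma inner_coord (z w : EuclideanSpace ℝ (Fin 2)) : ⟪z, w⟫ = z 0 * w 0 + z 1 * w 1 := by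
  simp [PiLp.inner_apply, Fin.sum_univ_two, mul_comm]

lemma norm_sq_coord (z : EuclideanSpace ℝ (Fin 2)) : z 0 ^ 2 + z 1 ^ 2 = ‖z‖ ^ 2 := by
  rw [← real_inner_self_eq_norm_sq, inner_coord]
  ring

set_option maxHeartbeats 1000000 in
/-- If `p q` is a segment whose diameter-disc touches the circle of radius `r` at `r u`, then all
unit vectors `w` satisfying the touching inequalities with respect to `p` and `q`, as well as `u`
itself, lie in one open half-plane. -/
lemma exists_normal {r ρ : ℝ} (hr : 0 < r) {p q u : EuclideanSpace ℝ (Fin 2)}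
    (hu : ‖u‖ = 1) (hpq : p + q = (2 * (r + ρ)) • u) (hd : ‖p - q‖ = 2 * ρ)
    (hp : r ≤ ⟪p, u⟫) (hq : r ≤ ⟪q, u⟫) :
    ∃ v : EuclideanSpace ℝ (Fin 2), 0 < ⟪u, v⟫ ∧ ∀ w : EuclideanSpace ℝ (Fin 2), ‖w‖ = 1 →
      2 * r ≤ ⟪p, u + w⟫ → 2 * r ≤ ⟪q, u + w⟫ → 0 < ⟪w, v⟫ := by
  have hu2 : u 0 ^ 2 + u 1 ^ 2 = 1 := by
    rw [norm_sq_coord, hu, one_pow]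
  have hd2 : (p 0 - q 0) ^ 2 + (p 1 - q 1) ^ 2 = (2 * ρ) ^ 2 := by
    rw [← hd, ← norm_sq_coord, PiLp.sub_apply, PiLp.sub_apply]
  have e0 : p 0 + q 0 = 2 * (r + ρ) * u 0 := by simpa using congrArg (fun z => z 0) hpq
  have e1 : p 1 + q 1 = 2 * (r + ρ) * u 1 := by simpa using congrArg (fun z => z 1) hpq
  have hq0 : q 0 = 2 * (r + ρ) * u 0 - p 0 := by linarith
  have hq1 : q 1 = 2 * (r + ρ) * u 1 - p 1 := by linarith
  have key := inner_coord
  have hp' := hp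
  have hq' := hq
  rw [key] at hp' hq'
  obtain ⟨x, hx⟩ : ∃ x, x = p 0 * u 0 + p 1 * u 1 - r := ⟨_, rfl⟩
  obtain ⟨x', hx'⟩ : ∃ x', x' = q 0 * u 0 + q 1 * u 1 - r := ⟨_, rfl⟩
  obtain ⟨y, hy⟩ : ∃ y, y = -(p 0 * u 1) + p 1 * u 0 := ⟨_, rfl⟩
  have p0 : p 0 = (r + x) * u 0 - y * u 1 := by
    rw [hx, hy]; linear_combination (-p 0) * hu2
  have p1 : p 1 = (r + x) * u 1 + y * u 0 := by
    rw [hx, hy]; linear_combination (-p 1) * hu2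
  have hsum : x + x' = 2 * ρ := by
    rw [hx, hx', hq0, hq1]; linear_combination (2 * (r + ρ)) * hu2
  have q0 : q 0 = (r + x') * u 0 + y * u 1 := by
    rw [hq0]; linear_combination (-u 0) * hsum - p0
  have q1 : q 1 = (r + x') * u 1 - y * u 0 := by
    rw [hq1]; linear_combination (-u 1) * hsum - p1
  have hxy : x * x' = y ^ 2 := by
    rw [p0, p1, q0, q1, ← hsum] at hd2
    linear_combination (-1 / 4) * hd2 + (((x - x') ^ 2 + 4 * y ^ 2) / 4) * hu2
  have hx0 : 0 ≤ x := by linarith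
  have hx'0 : 0 ≤ x' := by linarith
  -- The coordinates `c`, `s` of `w` in the frame given by `u` and its rotation by a right angle.
  have frame : ∀ w : EuclideanSpace ℝ (Fin 2), ‖w‖ = 1 →
      2 * r ≤ ⟪p, u + w⟫ → 2 * r ≤ ⟪q, u + w⟫ → ∃ c s : ℝ,
        c = u 0 * w 0 + u 1 * w 1 ∧ s = u 0 * w 1 - u 1 * w 0 ∧ c ^ 2 + s ^ 2 = 1 ∧
        r * (1 - c) ≤ x * (1 + c) + y * s ∧ r * (1 - c) ≤ x' * (1 + c) - y * s := by
    intro w hw h1 h2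
    have hw2 : w 0 ^ 2 + w 1 ^ 2 = 1 := by
      rw [norm_sq_coord, hw, one_pow]
    rw [key] at h1 h2
    simp only [PiLp.add_apply] at h1 h2
    rw [p0, p1] at h1
    rw [q0, q1] at h2
    refine ⟨_, _, rfl, rfl, ?_, ?_, ?_⟩
    · linear_combination (w 0 ^ 2 + w 1 ^ 2) * hu2 + hw2
    · linear_combination h1 + (r + x) * hu2
    · linear_combination h2 + (r + x') * hu2
  rcases lt_trichotomy y 0 with hy0 | hy0 | hy0
  · refine ⟨!₂[-2 * y * u 0 - (x - x') * u 1, -2 * y * u 1 + (x - x') * u 0], ?_, ?_⟩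
    · rw [key]
      simp only [Matrix.cons_val_zero, Matrix.cons_val_one]
      linear_combination 2 * hy0 + 2 * y * hu2
    · intro w hw h1 h2
      obtain ⟨c, s, hc, hs, hcs, g1, g2⟩ := frame w hw h1 h2
      have := pos_of_touching hr hx'0 hx0 (y := -y) (c := c) (s := s) (by linarith) (by linarith)
        hcs (by linarith) (by linarith)
      rw [key]
      simp only [Matrix.cons_val_zero, Matrix.cons_val_one]
      rw [hc, hs] at this
      linear_combination this
  -- If `y = 0` then `p` or `q` is the tangency point, which forces `w = u`.
  · refine ⟨u, ?_, ?_⟩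
    · rw [key]; nlinarith
    · intro w hw h1 h2
      obtain ⟨c, s, hc, hs, hcs, g1, g2⟩ := frame w hw h1 h2
      rw [hy0] at hxy g1 g2
      have hcpos : 0 < c := by
        have : x = 0 ∨ x' = 0 := by simpa using hxy
        rcases this with h | h
        · rw [h] at g1; nlinarith
        · rw [h] at g2; nlinarith
      rw [key]
      linarith
  · refine ⟨!₂[2 * y * u 0 - (x' - x) * u 1, 2 * y * u 1 + (x' - x) * u 0], ?_, ?_⟩
    · rw [key]
      simp only [Matrix.cons_val_zero, Matrix.cons_val_one]
      linear_combination 2 * hy0 - 2 * y * hu2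
    · intro w hw h1 h2
      obtain ⟨c, s, hc, hs, hcs, g1, g2⟩ := frame w hw h1 h2
      have := pos_of_touching hr hx0 hx'0 hxy hy0 hcs g1 g2
      rw [key]
      simp only [Matrix.cons_val_zero, Matrix.cons_val_one]
      rw [hc, hs] at this
      linear_combination this

lemma not_mem_convexHull_of_pos {ι : Type*} {m : ι → EuclideanSpace ℝ (Fin 2)}
    {v : EuclideanSpace ℝ (Fin 2)} (h : ∀ j, 0 < ⟪m j, v⟫) :
    (0 : EuclideanSpace ℝ (Fin 2)) ∉ convexHull ℝ (Set.range m) := by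
  intro h0
  have hconv : Convex ℝ {z : EuclideanSpace ℝ (Fin 2) | 0 < ⟪v, z⟫} :=
    convex_halfSpace_gt (innerₛₗ ℝ v).isLinear 0
  have hsub : Set.range m ⊆ {z : EuclideanSpace ℝ (Fin 2) | 0 < ⟪v, z⟫} := by
    rintro _ ⟨j, rfl⟩
    simpa [real_inner_comm] using h j
  simpa using convexHull_min hsub hconv h0

/-- The disc around `p` of radius at most `⟪p, u⟫ - r` meets a disc contained in the half-plane
`r ≤ ⟪x, w⟫`, so it reaches that half-plane. -/
lemma two_mul_le_of_near {r α β : ℝ} {p z u w : EuclideanSpace ℝ (Fin 2)} (hw : ‖w‖ = 1)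
    (hα : α ≤ ⟪p, u⟫ - r) (hβ : β ≤ ⟪z, w⟫ - r) (h : ‖p - z‖ ≤ α + β) :
    2 * r ≤ ⟪p, u + w⟫ := by
  have h1 := abs_real_inner_le_norm (p - z) w
  rw [hw, mul_one] at h1
  have h2 := (abs_le.1 h1).1
  rw [inner_sub_left] at h2
  rw [inner_add_right]
  linarith

/-- Points on the far side of the tangent line at `r u` are within distance `⟪p, u⟫ - r` of it. -/
lemma infDist_tangent_le {r n : ℝ} {p u m : EuclideanSpace ℝ (Fin 2)} (hu : ‖u‖ = 1)
    (hm : m = n • u) (hp : r ≤ ⟪p, u⟫) :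
    Metric.infDist p {x | ⟪x - r • u, m⟫ = 0} ≤ ⟪p, u⟫ - r := by
  have hmem : p - (⟪p, u⟫ - r) • u ∈ {x : EuclideanSpace ℝ (Fin 2) | ⟪x - r • u, m⟫ = 0} := by
    simp only [Set.mem_ofPred_eq, hm, inner_sub_left, inner_smul_left, inner_smul_right,
      real_inner_self_eq_norm_sq, hu]
    simp
  refine (Metric.infDist_le_dist_of_mem hmem).trans ?_
  rw [dist_eq_norm, sub_sub_cancel, norm_smul, hu, mul_one, Real.norm_eq_abs,
    abs_of_nonneg (by linarith)]

/-- Lemma for the case `r > 0`: given `k ∈ {2,3}` segments `a_i b_i` in the plane with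
pairwise distinct endpoints whose diameter-discs are externally tangent to the circle of
radius `r` centered at the origin, whose midpoints have the origin in their convex hull
but minimally so, then (with `t_i` the tangency points, `ℓ_i` the common internal tangent
lines and `r_{a_i}, r_{b_i}` the distances of `a_i, b_i` to `ℓ_i`) for every `i` there is
`j ≠ i` such that either `‖a_i − a_j‖ > r_{a_i} + r_{a_j}` and `‖a_i − b_j‖ > r_{a_i} + r_{b_j}`,
or `‖b_i − a_j‖ > r_{b_i} + r_{a_j}` and `‖b_i − b_j‖ > r_{b_i} + r_{b_j}`. -/
theorem red_edges_lemma_pos_radius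
    (r : ℝ) (hr : 0 < r) (k : ℕ) (hk : k = 2 ∨ k = 3)
    (a b : Fin k → EuclideanSpace ℝ (Fin 2))
    (hainj : Function.Injective a) (hbinj : Function.Injective b)
    (hab : ∀ i j, a i ≠ b j)
    (htang : ∀ i, ‖(2⁻¹ : ℝ) • (a i + b i)‖ = r + ‖a i - b i‖ / 2)
    (hconv : (0 : EuclideanSpace ℝ (Fin 2)) ∈
      convexHull ℝ (Set.range fun i => (2⁻¹ : ℝ) • (a i + b i)))
    (hminimal : ∀ I : Finset (Fin k), I.Nonempty → I ≠ Finset.univ →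
      (0 : EuclideanSpace ℝ (Fin 2)) ∉
        convexHull ℝ {x | ∃ i ∈ I, x = (2⁻¹ : ℝ) • (a i + b i)})
    (t : Fin k → EuclideanSpace ℝ (Fin 2))
    (ht : ∀ i, t i = (r / ‖a i + b i‖) • (a i + b i))
    (L : Fin k → Set (EuclideanSpace ℝ (Fin 2)))
    (hL : ∀ i, L i = {x | ⟪x - t i, a i + b i⟫ = 0})
    (ra rb : Fin k → ℝ)
    (hra : ∀ i, ra i = Metric.infDist (a i) (L i))
    (hrb : ∀ i, rb i = Metric.infDist (b i) (L i)) :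
    ∀ i, ∃ j, j ≠ i ∧
      ((ra i + ra j < ‖a i - a j‖ ∧ ra i + rb j < ‖a i - b j‖) ∨
       (rb i + ra j < ‖b i - a j‖ ∧ rb i + rb j < ‖b i - b j‖)) := by
  intro i
  by_contra! hno
  have hn : ∀ j, ‖a j + b j‖ = 2 * (r + ‖a j - b j‖ / 2) := by
    intro j
    have := htang j
    rw [norm_smul] at this
    norm_num at this
    linarith
  have hnpos : ∀ j, 0 < ‖a j + b j‖ := by
    intro j
    rw [hn]
    positivity
  obtain ⟨u, hu⟩ : ∃ u : Fin k → EuclideanSpace ℝ (Fin 2),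
      ∀ j, u j = (‖a j + b j‖)⁻¹ • (a j + b j) := ⟨_, fun _ => rfl⟩
  have hu1 : ∀ j, ‖u j‖ = 1 := by
    intro j
    rw [hu, norm_smul, norm_inv, norm_norm, inv_mul_cancel₀ (hnpos j).ne']
  have hm : ∀ j, a j + b j = ‖a j + b j‖ • u j := by
    intro j
    rw [hu, smul_smul, mul_inv_cancel₀ (hnpos j).ne', one_smul]
  have htu : ∀ j, t j = r • u j := by
    intro j
    rw [ht, hu, smul_smul, div_eq_mul_inv]
  have hsum : ∀ j, ⟪a j, u j⟫ + ⟪b j, u j⟫ = ‖a j + b j‖ := by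
    intro j
    rw [← inner_add_left]
    conv_lhs => rw [hm j]
    rw [inner_smul_left, real_inner_self_eq_norm_sq, hu1]
    simp
  have hdiff : ∀ j, |⟪a j, u j⟫ - ⟪b j, u j⟫| ≤ ‖a j - b j‖ := by
    intro j
    rw [← inner_sub_left]
    simpa [hu1] using abs_real_inner_le_norm (a j - b j) (u j)
  have hau : ∀ j, r ≤ ⟪a j, u j⟫ := by
    intro j
    linarith [hsum j, hn j, (abs_le.1 (hdiff j)).1]
  have hbu : ∀ j, r ≤ ⟪b j, u j⟫ := by
    intro j
    linarith [hsum j, hn j, (abs_le.1 (hdiff j)).2]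
  have hra' : ∀ j, ra j ≤ ⟪a j, u j⟫ - r := by
    intro j
    rw [hra, hL, htu]
    exact infDist_tangent_le (hu1 j) (hm j) (hau j)
  have hrb' : ∀ j, rb j ≤ ⟪b j, u j⟫ - r := by
    intro j
    rw [hrb, hL, htu]
    exact infDist_tangent_le (hu1 j) (hm j) (hbu j)
  obtain ⟨v, hvi, hv⟩ := exists_normal hr (ρ := ‖a i - b i‖ / 2) (hu1 i)
    (by rw [← hn]; exact hm i) (by ring) (hau i) (hbu i)
  refine not_mem_convexHull_of_pos (v := v) (fun j => ?_) hconv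
  have huv : 0 < ⟪u j, v⟫ := by
    by_cases hj : j = i
    · rw [hj]; exact hvi
    obtain ⟨h1, h2⟩ := hno j hj
    refine hv (u j) (hu1 j) ?_ ?_
    · by_cases hc : ra i + ra j < ‖a i - a j‖
      · exact two_mul_le_of_near (hu1 j) (hra' i) (hrb' j) (h1 hc)
      · exact two_mul_le_of_near (hu1 j) (hra' i) (hra' j) (not_lt.1 hc)
    · by_cases hc : rb i + ra j < ‖b i - a j‖
      · exact two_mul_le_of_near (hu1 j) (hrb' i) (hrb' j) (h2 hc)
      · exact two_mul_le_of_near (hu1 j) (hrb' i) (hra' j) (not_lt.1 hc)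
  rw [hm j, inner_smul_left, inner_smul_left]
  have := mul_pos (hnpos j) huv
  simpa using this
end
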